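/- Let n ≥ 9 be a natural number, G either Alt_n or Sym_n, c ∈ G a 3-cycle, 0 < ε < 1, and 3/4 ≤ α ≤ 4/5. Set R := ⌈(1/2)·log_α(ε)⌉, where log_α(ε) = log(ε)/log(α) with log the natural logarithm. Let r_1, …, r_R be independent, uniformly distributed random elements of the set of all elements of G that are pre-bolstering with respect to c, and for each i let k_i be the (unique) integer such that r_i is k_i-pre-bolstering with respect to c. Then with probability at least 1 − ε there is at least one j with k_j ≥ max(9, ⌈αn⌉ + 1). -/

import Mathlib

open scoped Classical

/-- `r` is `k`-pre-bolstering with respect to the `3`-cycle `c` if, for some labeling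
`supp c = {u,v,w}`, distinct points `a 0, …, a (α−1), b 0, …, b (β−1)` outside `supp c`
with `α, β ≥ 2` and `k = α + β + 3`, the disjoint cycle form of `r` is
`(w,u,a_1,…,a_α)(v,b_1,…,b_β)(⋯)` or `(w,u,a_1,…,a_α,v,b_1,…,b_β)(⋯)`, where `(⋯)` is an
arbitrary permutation of the remaining points. -/
def IsKPreBolstering {n : ℕ} (k : ℕ) (c r : Equiv.Perm (Fin n)) : Prop :=
  ∃ (u v w : Fin n) (α β : ℕ) (a b : ℕ → Fin n),
    c.support = {u, v, w} ∧ 2 ≤ α ∧ 2 ≤ β ∧ k = α + β + 3 ∧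
    (∀ i < α, ∀ j < α, a i = a j → i = j) ∧
    (∀ i < β, ∀ j < β, b i = b j → i = j) ∧
    (∀ i < α, ∀ j < β, a i ≠ b j) ∧
    (∀ i < α, a i ∉ c.support) ∧ (∀ j < β, b j ∉ c.support) ∧
    r w = u ∧ r u = a 0 ∧ r v = b 0 ∧
    (∀ i, i + 1 < α → r (a i) = a (i + 1)) ∧
    (∀ j, j + 1 < β → r (b j) = b (j + 1)) ∧
    ((r (a (α - 1)) = w ∧ r (b (β - 1)) = v) ∨
     (r (a (α - 1)) = v ∧ r (b (β - 1)) = w))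

/-- `r` is pre-bolstering with respect to `c` if it is `k`-pre-bolstering for some `k`. -/
def IsPreBolstering {n : ℕ} (c r : Equiv.Perm (Fin n)) : Prop :=
  ∃ k, IsKPreBolstering k c r

open Equiv

lemma pb_card_agree {n : ℕ} {ι : Type} [Fintype ι] [DecidableEq ι] (s : ι ↪ Fin n) (σ : Perm ι) :
    Nat.card {r : Perm (Fin n) // ∀ i, r (s i) = s (σ i)} = (n - Fintype.card ι).factorial := by
  have e : {r : Perm (Fin n) // ∀ i, r (s i) = s (σ i)} ≃
      {r : Perm (Fin n) // ∀ p, ¬ (p ∉ Set.range s) → r p = p} :=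
    { toFun := fun r => ⟨(σ.viaFintypeEmbedding s)⁻¹ * r.1, by
        intro p hp
        simp only [not_not] at hp
        obtain ⟨i, rfl⟩ := hp
        rw [Perm.mul_apply, r.2, Perm.inv_eq_iff_eq, Perm.viaFintypeEmbedding_apply_image]⟩
      invFun := fun r => ⟨(σ.viaFintypeEmbedding s) * r.1, by
        intro i
        rw [Perm.mul_apply, r.2 (s i) (by simp), Perm.viaFintypeEmbedding_apply_image]⟩
      left_inv := fun r => by simp
      right_inv := fun r => by simp }
  rw [Nat.card_congr e, ← Nat.card_congr (Perm.subtypeEquivSubtypePerm (fun p => p ∉ Set.range s)),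
    Nat.card_perm]
  congr 1
  rw [Nat.card_eq_fintype_card, Fintype.card_subtype_compl, Fintype.card_fin]
  congr 1
  exact Fintype.card_congr (Equiv.ofInjective s s.injective).symm

/-- The step pattern. -/
def pbStepFun (α β : ℕ) (hα : 0 < α) (hβ : 0 < β) :
    Fin 3 ⊕ (Fin α ⊕ Fin β) → Fin 3 ⊕ (Fin α ⊕ Fin β)
  | Sum.inl i => if i = 0 then Sum.inl 1 else if i = 1 then Sum.inr (Sum.inl ⟨0, hα⟩)
      else Sum.inr (Sum.inr ⟨0, hβ⟩)
  | Sum.inr (Sum.inl i) => if h : i.1 + 1 < α then Sum.inr (Sum.inl ⟨i.1 + 1, h⟩) else Sum.inl 0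
  | Sum.inr (Sum.inr i) => if h : i.1 + 1 < β then Sum.inr (Sum.inr ⟨i.1 + 1, h⟩) else Sum.inl 2

lemma pbStepFun_inj (α β : ℕ) (hα : 0 < α) (hβ : 0 < β) :
    Function.Injective (pbStepFun α β hα hβ) := by
  intro x y h
  rcases x with x | x | x <;> rcases y with y | y | y <;>
    simp only [pbStepFun] at h <;> split_ifs at h <;> simp at h <;> (try congr) <;>
    (try ext) <;> grind

noncomputable def pbStep (α β : ℕ) (hα : 0 < α) (hβ : 0 < β) :
    Perm (Fin 3 ⊕ (Fin α ⊕ Fin β)) :=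
  Equiv.ofBijective _ (Finite.injective_iff_bijective.1 (pbStepFun_inj α β hα hβ))

/-- raw data -/
def PbRaw {n : ℕ} (c r : Perm (Fin n)) (u v w : Fin n) (α β : ℕ) (a b : ℕ → Fin n) : Prop :=
    c.support = {u, v, w} ∧ 2 ≤ α ∧ 2 ≤ β ∧
    (∀ i < α, ∀ j < α, a i = a j → i = j) ∧
    (∀ i < β, ∀ j < β, b i = b j → i = j) ∧
    (∀ i < α, ∀ j < β, a i ≠ b j) ∧
    (∀ i < α, a i ∉ c.support) ∧ (∀ j < β, b j ∉ c.support) ∧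
    r w = u ∧ r u = a 0 ∧ r v = b 0 ∧
    (∀ i, i + 1 < α → r (a i) = a (i + 1)) ∧
    (∀ j, j + 1 < β → r (b j) = b (j + 1)) ∧
    ((r (a (α - 1)) = w ∧ r (b (β - 1)) = v) ∨
     (r (a (α - 1)) = v ∧ r (b (β - 1)) = w))

lemma pb_iff {n : ℕ} (k : ℕ) (c r : Perm (Fin n)) : IsKPreBolstering k c r ↔
    ∃ α β u v w a b, k = α + β + 3 ∧ PbRaw c r u v w α β a b := by
  unfold IsKPreBolstering PbRaw
  constructor
  · rintro ⟨u, v, w, α, β, a, b, h1, h2, h3, h4, h⟩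
    exact ⟨α, β, u, v, w, a, b, h4, h1, h2, h3, h⟩
  · rintro ⟨α, β, u, v, w, a, b, h4, h1, h2, h3, h⟩
    exact ⟨u, v, w, α, β, a, b, h1, h2, h3, h4, h⟩

lemma pb_seq_uniq {X : Type} (r : X → X) (S : Set X) (p : X) (α α' : ℕ) (a a' : ℕ → X)
    (hα : 0 < α) (hα' : 0 < α')
    (h0 : r p = a 0) (h0' : r p = a' 0) (hs : ∀ i, i + 1 < α → r (a i) = a (i + 1))
    (hs' : ∀ i, i + 1 < α' → r (a' i) = a' (i + 1)) (ha : ∀ i < α, a i ∉ S)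
    (ha' : ∀ i < α', a' i ∉ S) (he : r (a (α - 1)) ∈ S) (he' : r (a' (α' - 1)) ∈ S) :
    α = α' ∧ ∀ i < α, a i = a' i := by
  have key : ∀ i, i < α → i < α' → a i = a' i := by
    intro i
    induction i with
    | zero => intro _ _; rw [← h0, ← h0']
    | succ i ih =>
      intro h h'
      rw [← hs i h, ← hs' i h', ih (by omega) (by omega)]
  have : α = α' := by
    rcases lt_trichotomy α α' with h | h | h
    · exfalso
      have := hs' (α - 1) (by omega)
      rw [← key (α - 1) (by omega) (by omega)] at this
      rw [this] at he
      exact ha' _ (by omega) he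
    · exact h
    · exfalso
      have := hs (α' - 1) (by omega)
      rw [key (α' - 1) (by omega) (by omega)] at this
      rw [this] at he'
      exact ha _ (by omega) he'
  subst this
  exact ⟨rfl, fun i h => key i h h⟩

lemma pb_distinct {n : ℕ} {c : Perm (Fin n)} (hc : c.IsThreeCycle) {u v w : Fin n}
    (h : c.support = {u, v, w}) : u ≠ v ∧ u ≠ w ∧ v ≠ w := by
  have := hc.card_support
  rw [h] at this
  refine ⟨?_, ?_, ?_⟩ <;> rintro rfl
  · have := Finset.card_le_two (a := u) (b := w); simp_all
  · have := Finset.card_le_two (a := v) (b := u); simp_all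
  · have := Finset.card_le_two (a := u) (b := v); simp_all

lemma pb_raw_uniq {n : ℕ} {c r : Perm (Fin n)} (hc : c.IsThreeCycle) {u v w u' v' w' : Fin n}
    {α β α' β' : ℕ} {a b a' b' : ℕ → Fin n} (h : PbRaw c r u v w α β a b)
    (h' : PbRaw c r u' v' w' α' β' a' b') :
    u = u' ∧ v = v' ∧ w = w' ∧ α = α' ∧ β = β' ∧ (∀ i < α, a i = a' i) ∧
      ∀ i < β, b i = b' i := by
  obtain ⟨hS, hα, hβ, -, -, -, h4, h5, hw, hu, hv, ha, hb, he⟩ := h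
  obtain ⟨hS', hα', hβ', -, -, -, h4', h5', hw', hu', hv', ha', hb', he'⟩ := h'
  have hd := pb_distinct hc hS
  have hd' := pb_distinct hc hS'
  have mem : ∀ x, x ∈ c.support ↔ x = u ∨ x = v ∨ x = w := by simp [hS]
  have mem' : ∀ x, x ∈ c.support ↔ x = u' ∨ x = v' ∨ x = w' := by simp [hS']
  have hww : w = w' := by
    have h1 : r w' ∈ c.support := by rw [hw', mem']; simp
    rcases (mem w').1 ((mem' w').2 (by simp)) with e | e | e
    · rw [e, hu] at h1; exact absurd h1 (h4 0 (by omega))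
    · rw [e, hv] at h1; exact absurd h1 (h5 0 (by omega))
    · exact e.symm
  subst hww
  have huu : u = u' := by rw [← hw, ← hw']
  subst huu
  have hvv : v = v' := by
    rcases (mem' v).1 ((mem v).2 (by simp)) with e | e | e
    · exact absurd e.symm hd.1
    · exact e
    · exact absurd e hd.2.2
  subst hvv
  have hvS : v ∈ c.support := (mem v).2 (by simp)
  have hwS : w ∈ c.support := (mem w).2 (by simp)
  obtain ⟨e1, e2⟩ := pb_seq_uniq r (c.support : Set (Fin n)) u α α' a a' (by omega) (by omega)
    hu hu' ha ha' h4 h4' (by rcases he with he | he <;> rw [he.1] <;> assumption)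
    (by rcases he' with he | he <;> rw [he.1] <;> assumption)
  obtain ⟨e3, e4⟩ := pb_seq_uniq r (c.support : Set (Fin n)) v β β' b b' (by omega) (by omega)
    hv hv' hb hb' h5 h5' (by rcases he with he | he <;> rw [he.2] <;> assumption)
    (by rcases he' with he | he <;> rw [he.2] <;> assumption)
  exact ⟨rfl, rfl, rfl, e1, e3, e2, e4⟩

/-- data -/
abbrev PbData {n : ℕ} (c : Perm (Fin n)) (α β : ℕ) : Type :=
  (Fin 3 ≃ {p // p ∈ c.support}) × ((Fin α ⊕ Fin β) ↪ {p // p ∉ c.support})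

/-- all points -/
def PbData.s {n : ℕ} {c : Perm (Fin n)} {α β : ℕ} (d : PbData c α β) :
    (Fin 3 ⊕ (Fin α ⊕ Fin β)) ↪ Fin n where
  toFun := Sum.elim (fun i => (d.1 i).1) (fun i => (d.2 i).1)
  inj' := by
    apply Function.Injective.sumElim
    · exact Subtype.val_injective.comp d.1.injective
    · exact Subtype.val_injective.comp d.2.injective
    · intro i j h
      exact (d.2 j).2 (h ▸ (d.1 i).2)

/-- The first form. -/
def PbOne {n : ℕ} {c : Perm (Fin n)} {α β : ℕ} (hα : 0 < α) (hβ : 0 < β) (d : PbData c α β)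
    (r : Perm (Fin n)) : Prop :=
  ∀ i, r (d.s i) = d.s (pbStep α β hα hβ i)

/-- The transposition `(v w)`. -/
def PbData.t {n : ℕ} {c : Perm (Fin n)} {α β : ℕ} (d : PbData c α β) : Perm (Fin n) :=
  swap (d.1 2).1 (d.1 0).1

lemma pbOne_iff {n : ℕ} {c : Perm (Fin n)} {α β : ℕ} (hα : 0 < α) (hβ : 0 < β)
    (d : PbData c α β) (r : Perm (Fin n)) : PbOne hα hβ d r ↔
    r (d.1 0).1 = (d.1 1).1 ∧ r (d.1 1).1 = (d.2 (Sum.inl ⟨0, hα⟩)).1 ∧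
    r (d.1 2).1 = (d.2 (Sum.inr ⟨0, hβ⟩)).1 ∧
    (∀ i, ∀ h : i + 1 < α, r (d.2 (Sum.inl ⟨i, by omega⟩)).1 = (d.2 (Sum.inl ⟨i + 1, h⟩)).1) ∧
    (∀ i, ∀ h : i + 1 < β, r (d.2 (Sum.inr ⟨i, by omega⟩)).1 = (d.2 (Sum.inr ⟨i + 1, h⟩)).1) ∧
    r (d.2 (Sum.inl ⟨α - 1, by omega⟩)).1 = (d.1 0).1 ∧
    r (d.2 (Sum.inr ⟨β - 1, by omega⟩)).1 = (d.1 2).1 := by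
  constructor
  · intro h
    refine ⟨h (Sum.inl 0), h (Sum.inl 1), h (Sum.inl 2), ?_, ?_, ?_, ?_⟩
    · intro i hi
      have := h (Sum.inr (Sum.inl ⟨i, by omega⟩))
      simpa [pbStep, pbStepFun, hi, PbData.s] using this
    · intro i hi
      have := h (Sum.inr (Sum.inr ⟨i, by omega⟩))
      simpa [pbStep, pbStepFun, hi, PbData.s] using this
    · have := h (Sum.inr (Sum.inl ⟨α - 1, by omega⟩))
      have e : ¬ (α - 1 + 1 < α) := by omega
      simpa only [pbStep, pbStepFun, PbData.s, Equiv.ofBijective_apply, Function.Embedding.coeFn_mk, Sum.elim_inl, Sum.elim_inr, e, dif_neg,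
        not_false_eq_true] using this
    · have := h (Sum.inr (Sum.inr ⟨β - 1, by omega⟩))
      have e : ¬ (β - 1 + 1 < β) := by omega
      simpa only [pbStep, pbStepFun, PbData.s, Equiv.ofBijective_apply, Function.Embedding.coeFn_mk, Sum.elim_inl, Sum.elim_inr, e, dif_neg,
        not_false_eq_true] using this
  · rintro ⟨h0, h1, h2, ha, hb, hae, hbe⟩ (i | ⟨i, hi⟩ | ⟨i, hi⟩)
    · fin_cases i
      · exact h0
      · exact h1
      · exact h2
    · by_cases h : i + 1 < α
      · simpa [pbStep, pbStepFun, h, PbData.s] using ha i h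
      · obtain rfl : i = α - 1 := by omega
        simpa only [pbStep, pbStepFun, PbData.s, Equiv.ofBijective_apply, Function.Embedding.coeFn_mk, Sum.elim_inl, Sum.elim_inr, h, dif_neg,
          not_false_eq_true] using hae
    · by_cases h : i + 1 < β
      · simpa [pbStep, pbStepFun, h, PbData.s] using hb i h
      · obtain rfl : i = β - 1 := by omega
        simpa only [pbStep, pbStepFun, PbData.s, Equiv.ofBijective_apply, Function.Embedding.coeFn_mk, Sum.elim_inl, Sum.elim_inr, h, dif_neg,
          not_false_eq_true] using hbe

/-- `a` sequence -/
noncomputable def PbData.a {n : ℕ} {c : Perm (Fin n)} {α β : ℕ} (d : PbData c α β) (i : ℕ) : Fin n :=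
  if h : i < α then (d.2 (Sum.inl ⟨i, h⟩)).1 else (d.1 0).1

/-- `b` sequence -/
noncomputable def PbData.b {n : ℕ} {c : Perm (Fin n)} {α β : ℕ} (d : PbData c α β) (i : ℕ) : Fin n :=
  if h : i < β then (d.2 (Sum.inr ⟨i, h⟩)).1 else (d.1 0).1

lemma PbData.a_eq {n : ℕ} {c : Perm (Fin n)} {α β : ℕ} (d : PbData c α β) (i : ℕ) (h : i < α) :
    d.a i = (d.2 (Sum.inl ⟨i, h⟩)).1 := by simp [PbData.a, h]

lemma PbData.b_eq {n : ℕ} {c : Perm (Fin n)} {α β : ℕ} (d : PbData c α β) (i : ℕ) (h : i < β) :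
    d.b i = (d.2 (Sum.inr ⟨i, h⟩)).1 := by simp [PbData.b, h]

lemma pb_support {n : ℕ} {c : Perm (Fin n)} {α β : ℕ} (d : PbData c α β) :
    c.support = {(d.1 1).1, (d.1 2).1, (d.1 0).1} := by
  ext x
  simp only [Finset.mem_insert, Finset.mem_singleton]
  constructor
  · intro h
    obtain ⟨i, hi⟩ := d.1.surjective ⟨x, h⟩
    have : (d.1 i).1 = x := by rw [hi]
    fin_cases i <;> simp_all
  · rintro (rfl | rfl | rfl) <;> exact (d.1 _).2

/-- Conversions of the two forms. -/
lemma pb_raw_of_data {n : ℕ} {c r : Perm (Fin n)} {α β : ℕ} (hα : 2 ≤ α) (hβ : 2 ≤ β)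
    (d : PbData c α β)
    (h : PbOne (by omega) (by omega) d r ∨ PbOne (by omega) (by omega) d (d.t * r)) :
    PbRaw c r (d.1 1).1 (d.1 2).1 (d.1 0).1 α β d.a d.b := by
  have hsw : ∀ x y, d.t x = y ↔ x = d.t y := by
    intro x y
    unfold PbData.t
    constructor
    · rintro rfl; simp
    · rintro rfl; simp
  have t0 : d.t (d.1 0).1 = (d.1 2).1 := by simp [PbData.t]
  have t2 : d.t (d.1 2).1 = (d.1 0).1 := by simp [PbData.t]
  have t1 : d.t (d.1 1).1 = (d.1 1).1 := by
    unfold PbData.t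
    apply swap_apply_of_ne_of_ne <;> intro h <;> have := d.1.injective (Subtype.ext h) <;> simp at this
  have tx : ∀ x, d.t (d.2 x).1 = (d.2 x).1 := by
    intro x
    unfold PbData.t
    apply swap_apply_of_ne_of_ne <;> intro h <;> exact (d.2 x).2 (h ▸ (d.1 _).2)
  have inj : ∀ x y, (d.2 x).1 = (d.2 y).1 → x = y := fun x y h => d.2.injective (Subtype.ext h)
  refine ⟨pb_support d, hα, hβ, ?_, ?_, ?_, ?_, ?_, ?_⟩
  · intro i hi j hj h
    rw [d.a_eq i hi, d.a_eq j hj] at h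
    simpa using inj _ _ h
  · intro i hi j hj h
    rw [d.b_eq i hi, d.b_eq j hj] at h
    simpa using inj _ _ h
  · intro i hi j hj h
    rw [d.a_eq i hi, d.b_eq j hj] at h
    simpa using inj _ _ h
  · intro i hi
    rw [d.a_eq i hi]; exact (d.2 _).2
  · intro i hi
    rw [d.b_eq i hi]; exact (d.2 _).2
  · rw [pbOne_iff, pbOne_iff] at h
    simp only [Perm.mul_apply, hsw, t0, t1, t2, tx] at h
    have key : ∀ A B C D E F F' : Prop, (A ∧ B ∧ C ∧ D ∧ E ∧ F) ∨ (A ∧ B ∧ C ∧ D ∧ E ∧ F') →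
      (A ∧ B ∧ C ∧ D ∧ E ∧ (F ∨ F')) := by tauto
    have h := key _ _ _ _ _ _ _ h
    obtain ⟨g0, g1, g2, ga, gb, ge⟩ := h
    rw [d.a_eq 0 (by omega), d.b_eq 0 (by omega), d.a_eq (α - 1) (by omega),
      d.b_eq (β - 1) (by omega)]
    refine ⟨g0, g1, g2, ?_, ?_, ge⟩
    · intro i hi
      rw [d.a_eq i (by omega), d.a_eq (i + 1) hi]; exact ga i hi
    · intro i hi
      rw [d.b_eq i (by omega), d.b_eq (i + 1) hi]; exact gb i hi

lemma pb_data_of_raw {n : ℕ} {c r : Perm (Fin n)} (hc : c.IsThreeCycle) {u v w : Fin n} {α β : ℕ}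
    {a b : ℕ → Fin n} (hα : 2 ≤ α) (hβ : 2 ≤ β)
    (h : PbRaw c r u v w α β a b) : ∃ d : PbData c α β,
    PbOne (by omega) (by omega) d r ∨ PbOne (by omega) (by omega) d (d.t * r) := by
  obtain ⟨hS, -, -, h1, h2, h3, h4, h5, hw, hu, hv, ha, hb, he⟩ := h
  obtain ⟨d1, d2, d3⟩ := pb_distinct hc hS
  have mem : ∀ x, x ∈ c.support ↔ x = u ∨ x = v ∨ x = w := by simp [hS]
  have hm : ∀ i : Fin 3, (![w, u, v] : Fin 3 → Fin n) i ∈ c.support := by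
    intro i; fin_cases i <;> simp [mem]
  have hi : Function.Injective (![w, u, v] : Fin 3 → Fin n) := by
    clear hm mem he ha hb hv hu hw h1 h2 h3 h4 h5 hS
    intro i j hij
    fin_cases i <;> fin_cases j <;> simp_all
  let ℓ : Fin 3 ≃ {p // p ∈ c.support} := Equiv.ofBijective
    (fun i => ⟨(![w, u, v] : Fin 3 → Fin n) i, hm i⟩) (by
      constructor
      · intro i j hij
        exact hi (Subtype.ext_iff.1 hij)
      · rintro ⟨x, hx⟩
        rcases (mem x).1 hx with rfl | rfl | rfl
        · exact ⟨1, rfl⟩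
        · exact ⟨2, rfl⟩
        · exact ⟨0, rfl⟩)
  let x : (Fin α ⊕ Fin β) ↪ {p // p ∉ c.support} :=
    ⟨Sum.elim (fun i => ⟨a i, h4 i i.2⟩) (fun i => ⟨b i, h5 i i.2⟩), by
      apply Function.Injective.sumElim
      · intro i j hij
        exact Fin.ext (h1 i i.2 j j.2 (Subtype.ext_iff.1 hij))
      · intro i j hij
        exact Fin.ext (h2 i i.2 j j.2 (Subtype.ext_iff.1 hij))
      · intro i j hij
        exact h3 i i.2 j j.2 (Subtype.ext_iff.1 hij)⟩
  refine ⟨(ℓ, x), ?_⟩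
  rw [pbOne_iff, pbOne_iff]
  have aS : ∀ i < α, swap v w (a i) = a i := by
    intro i hi
    apply swap_apply_of_ne_of_ne <;> intro h <;> exact h4 i hi (by simp [mem, h])
  have bS : ∀ i < β, swap v w (b i) = b i := by
    intro i hi
    apply swap_apply_of_ne_of_ne <;> intro h <;> exact h5 i hi (by simp [mem, h])
  rcases he with ⟨e1, e2⟩ | ⟨e1, e2⟩
  · left
    exact ⟨hw, hu, hv, fun i h => ha i h, fun i h => hb i h, e1, e2⟩
  · right
    refine ⟨?_, ?_, ?_, ?_, ?_, ?_, ?_⟩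
    · change swap v w (r w) = u
      rw [hw, swap_apply_of_ne_of_ne d1 d2]
    · change swap v w (r u) = a 0
      rw [hu, aS 0 (by omega)]
    · change swap v w (r v) = b 0
      rw [hv, bS 0 (by omega)]
    · intro i h
      change swap v w (r (a i)) = a (i + 1)
      rw [ha i h, aS _ h]
    · intro i h
      change swap v w (r (b i)) = b (i + 1)
      rw [hb i h, bS _ h]
    · change swap v w (r (a (α - 1))) = w
      rw [e1, swap_apply_left]
    · change swap v w (r (b (β - 1))) = v
      rw [e2, swap_apply_right]

lemma pb_data_uniq {n : ℕ} {c r : Perm (Fin n)} (hc : c.IsThreeCycle) {α β : ℕ} (hα : 2 ≤ α)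
    (hβ : 2 ≤ β) (d d' : PbData c α β)
    (h : PbOne (by omega) (by omega) d r ∨ PbOne (by omega) (by omega) d (d.t * r))
    (h' : PbOne (by omega) (by omega) d' r ∨ PbOne (by omega) (by omega) d' (d'.t * r)) :
    d = d' := by
  obtain ⟨e1, e2, e0, -, -, ea, eb⟩ :=
    pb_raw_uniq hc (pb_raw_of_data hα hβ d h) (pb_raw_of_data hα hβ d' h')
  refine Prod.ext ?_ ?_
  · ext i
    fin_cases i <;> simp_all
  · ext i
    rcases i with i | i
    · have := ea i i.2
      rw [d.a_eq i i.2, d'.a_eq i i.2] at this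
      simpa using congrArg Fin.val this
    · have := eb i i.2
      rw [d.b_eq i i.2, d'.b_eq i i.2] at this
      simpa using congrArg Fin.val this

lemma pb_card_one {n : ℕ} {c : Perm (Fin n)} {α β : ℕ} (hα : 0 < α) (hβ : 0 < β)
    (d : PbData c α β) :
    Nat.card {r : Perm (Fin n) // PbOne hα hβ d r} = (n - (α + β + 3)).factorial := by
  have := pb_card_agree d.s (pbStep α β hα hβ)
  rw [show α + β + 3 = Fintype.card (Fin 3 ⊕ (Fin α ⊕ Fin β)) by simp; ring]
  exact this

lemma pb_disj {n : ℕ} {c : Perm (Fin n)} {α β : ℕ} (hα : 0 < α) (hβ : 0 < β)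
    (d : PbData c α β) (r : Perm (Fin n)) (h : PbOne hα hβ d r) (h' : PbOne hα hβ d (d.t * r)) :
    False := by
  rw [pbOne_iff] at h h'
  have h1 := h.2.2.2.2.2.1
  have h2 := h'.2.2.2.2.2.1
  rw [Perm.mul_apply, h1] at h2
  simp only [PbData.t, swap_apply_right] at h2
  have := d.1.injective (Subtype.ext h2)
  simp at this

lemma pb_card_or {X : Type} [Finite X] (p q : X → Prop) (h : ∀ x, p x → q x → False) :
    Nat.card {x // p x ∨ q x} = Nat.card {x // p x} + Nat.card {x // q x} := by
  rw [← Nat.card_sum]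
  apply Nat.card_congr
  apply _root_.subtypeOrEquiv
  rw [Pi.disjoint_iff]
  intro x
  rw [Prop.disjoint_iff]
  by_contra hh
  exact h x hh.1 hh.2

lemma pb_fib {n : ℕ} {c : Perm (Fin n)} (H : Subgroup (Perm (Fin n)))
    (hH : H = ⊤ ∨ H = alternatingGroup (Fin n)) : ∃ h : ℕ, 0 < h ∧
    ∀ (α β : ℕ) (hα : 0 < α) (hβ : 0 < β) (d : PbData c α β),
    Nat.card {r : Perm (Fin n) // r ∈ H ∧ (PbOne hα hβ d r ∨ PbOne hα hβ d (d.t * r))} =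
      h * (n - (α + β + 3)).factorial := by
  rcases hH with rfl | rfl
  · refine ⟨2, by norm_num, ?_⟩
    intro α β hα hβ d
    simp only [Subgroup.mem_top, true_and]
    rw [pb_card_or _ _ (pb_disj hα hβ d), ← pb_card_one hα hβ d, two_mul]
    congr 1
    exact Nat.card_congr ((Equiv.mulLeft d.t).subtypeEquiv (fun r => Iff.rfl))
  · refine ⟨1, by norm_num, ?_⟩
    intro α β hα hβ d
    rw [one_mul, ← pb_card_one hα hβ d]
    have e1 : Nat.card {r : Perm (Fin n) // r ∈ alternatingGroup (Fin n) ∧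
        (PbOne hα hβ d r ∨ PbOne hα hβ d (d.t * r))} =
        Nat.card {r : Perm (Fin n) // (r ∈ alternatingGroup (Fin n) ∧ PbOne hα hβ d r) ∨
          (r ∈ alternatingGroup (Fin n) ∧ PbOne hα hβ d (d.t * r))} :=
      Nat.card_congr (Equiv.subtypeEquivRight (fun r => by tauto))
    have e2 : Nat.card {r : Perm (Fin n) // PbOne hα hβ d r} =
        Nat.card {r : Perm (Fin n) // (r ∈ alternatingGroup (Fin n) ∧ PbOne hα hβ d r) ∨
          (r ∉ alternatingGroup (Fin n) ∧ PbOne hα hβ d r)} :=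
      Nat.card_congr (Equiv.subtypeEquivRight (fun r => by tauto))
    rw [e1, e2, pb_card_or _ _ (fun r h h' => pb_disj hα hβ d r h.2 h'.2),
      pb_card_or _ _ (fun r h h' => h'.1 h.1)]
    congr 1
    refine Nat.card_congr ((Equiv.mulLeft d.t).subtypeEquiv (fun r => ?_))
    have hne : (d.1 2).1 ≠ (d.1 0).1 := by
      intro h
      have := d.1.injective (Subtype.ext h)
      simp at this
    have ht : Perm.sign d.t = -1 := Perm.sign_swap hne
    rw [Equiv.coe_mulLeft, Perm.mem_alternatingGroup, Perm.mem_alternatingGroup, Perm.sign_mul, ht]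
    rcases Int.units_eq_one_or (Perm.sign r) with h | h <;> simp [h]

/-- type `(α, β)` -/
def PbW {n : ℕ} (c r : Perm (Fin n)) (α β : ℕ) : Prop := ∃ u v w a b, PbRaw c r u v w α β a b

lemma pb_W_iff {n : ℕ} {c r : Perm (Fin n)} (hc : c.IsThreeCycle) {α β : ℕ} (hα : 2 ≤ α)
    (hβ : 2 ≤ β) : PbW c r α β ↔ ∃ d : PbData c α β,
      PbOne (by omega) (by omega) d r ∨ PbOne (by omega) (by omega) d (d.t * r) := by
  constructor
  · rintro ⟨u, v, w, a, b, h⟩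
    exact pb_data_of_raw hc hα hβ h
  · rintro ⟨d, h⟩
    exact ⟨_, _, _, _, _, pb_raw_of_data hα hβ d h⟩

lemma pb_W_le {n : ℕ} {c r : Perm (Fin n)} (hc : c.IsThreeCycle) {α β : ℕ} (h : PbW c r α β) :
    2 ≤ α ∧ 2 ≤ β ∧ α + β + 3 ≤ n := by
  obtain ⟨u, v, w, a, b, h⟩ := h
  refine ⟨h.2.1, h.2.2.1, ?_⟩
  obtain ⟨d, -⟩ := pb_data_of_raw hc h.2.1 h.2.2.1 h
  have := Fintype.card_le_of_embedding d.s
  simp at this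
  omega

lemma pb_card_W {n : ℕ} {c : Perm (Fin n)} (hc : c.IsThreeCycle) (H : Subgroup (Perm (Fin n)))
    (hH : H = ⊤ ∨ H = alternatingGroup (Fin n)) : ∃ C : ℕ, 0 < C ∧
    ∀ α β : ℕ, 2 ≤ α → 2 ≤ β → α + β + 3 ≤ n →
      Nat.card {r : Perm (Fin n) // r ∈ H ∧ PbW c r α β} = C := by
  obtain ⟨h, h0, hh⟩ := pb_fib (c := c) H hH
  have cS : Nat.card {p // p ∈ c.support} = 3 := by
    rw [Nat.card_eq_fintype_card, Fintype.card_coe, hc.card_support]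
  have cS' : Nat.card {p // p ∉ c.support} = n - 3 := by
    rw [Nat.card_eq_fintype_card, Fintype.card_subtype_compl, Fintype.card_fin, Fintype.card_coe,
      hc.card_support]
  have hne : Nonempty (Fin 3 ≃ {p // p ∈ c.support}) :=
    ⟨(Finite.equivFinOfCardEq cS).symm⟩
  refine ⟨h * (Nat.card (Fin 3 ≃ {p // p ∈ c.support}) * (n - 3).factorial), ?_, ?_⟩
  · have := Nat.card_pos (α := Fin 3 ≃ {p // p ∈ c.support})
    positivity
  intro α β hα hβ hk
  let F : (Σ d : PbData c α β, {r : Perm (Fin n) // r ∈ H ∧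
      (PbOne (by omega) (by omega) d r ∨ PbOne (by omega) (by omega) d (d.t * r))}) →
      {r : Perm (Fin n) // r ∈ H ∧ PbW c r α β} :=
    fun x => ⟨x.2.1, x.2.2.1, (pb_W_iff hc hα hβ).2 ⟨x.1, x.2.2.2⟩⟩
  have hF : Function.Bijective F := by
    constructor
    · rintro ⟨d, r, hr⟩ ⟨d', r', hr'⟩ e
      have : r = r' := Subtype.ext_iff.1 e
      subst this
      have := pb_data_uniq hc hα hβ d d' hr.2 hr'.2
      subst this
      rfl
    · rintro ⟨r, hr, hW⟩
      obtain ⟨d, hd⟩ := (pb_W_iff hc hα hβ).1 hW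
      exact ⟨⟨d, r, hr, hd⟩, rfl⟩
  rw [← Nat.card_congr (Equiv.ofBijective F hF), Nat.card_sigma]
  simp only [hh]
  rw [Finset.sum_const, Finset.card_univ, smul_eq_mul, ← Nat.card_eq_fintype_card, Nat.card_prod]
  rw [Nat.card_eq_fintype_card (α := (Fin α ⊕ Fin β) ↪ {p // p ∉ c.support}),
    Fintype.card_embedding_eq, ← Nat.card_eq_fintype_card (α := {p // p ∉ c.support}), cS']
  have := Nat.factorial_mul_descFactorial (n := n - 3) (k := α + β) (by omega)
  rw [show n - 3 - (α + β) = n - (α + β + 3) by omega] at this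
  rw [← this]
  simp only [Fintype.card_sum, Fintype.card_fin]
  ring

lemma pb_card_Q {n : ℕ} {c : Perm (Fin n)} (hc : c.IsThreeCycle) (H : Subgroup (Perm (Fin n)))
    (hH : H = ⊤ ∨ H = alternatingGroup (Fin n)) : ∃ C : ℕ, 0 < C ∧
    ∀ q : ℕ, q + 6 ≤ n →
      Nat.card {r : Perm (Fin n) // r ∈ H ∧ ∃ k, k < q + 7 ∧ IsKPreBolstering k c r} * 2 =
        C * (q * (q + 1)) := by
  obtain ⟨C, C0, hC⟩ := pb_card_W hc H hH
  refine ⟨C, C0, fun q hq => ?_⟩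
  let F : (Σ x : (Σ s : Fin q, Fin (s.1 + 1)),
      {r : Perm (Fin n) // r ∈ H ∧ PbW c r (x.2.1 + 2) (x.1.1 - x.2.1 + 2)}) →
      {r : Perm (Fin n) // r ∈ H ∧ ∃ k, k < q + 7 ∧ IsKPreBolstering k c r} :=
    fun x => ⟨x.2.1, x.2.2.1, x.1.1.1 + 7, by omega, (pb_iff _ _ _).2 (by
      obtain ⟨u, v, w, a, b, h⟩ := x.2.2.2
      exact ⟨_, _, u, v, w, a, b, by omega, h⟩)⟩
  have hF : Function.Bijective F := by
    constructor
    · rintro ⟨⟨⟨s, hs⟩, ⟨i, hi⟩⟩, r, hr⟩ ⟨⟨⟨s', hs'⟩, ⟨i', hi'⟩⟩, r', hr'⟩ e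
      have : r = r' := Subtype.ext_iff.1 e
      subst this
      simp only at hi hi'
      obtain ⟨-, u, v, w, a, b, h⟩ := id hr
      obtain ⟨-, u', v', w', a', b', h'⟩ := id hr'
      obtain ⟨-, -, -, e1, e2, -, -⟩ := pb_raw_uniq hc h h'
      simp only at e1 e2
      obtain rfl : i = i' := by omega
      obtain rfl : s = s' := by omega
      rfl
    · rintro ⟨r, hr, k, hk, hK⟩
      obtain ⟨α, β, u, v, w, a, b, rfl, h⟩ := (pb_iff _ _ _).1 hK
      obtain ⟨α, rfl⟩ := Nat.exists_eq_add_of_le' h.2.1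
      obtain ⟨β, rfl⟩ := Nat.exists_eq_add_of_le' h.2.2.1
      refine ⟨⟨⟨⟨α + β, by omega⟩, ⟨α, by simp⟩⟩, r, hr, ?_⟩, rfl⟩
      simp only [Nat.add_sub_cancel_left]
      exact ⟨u, v, w, a, b, h⟩
  rw [← Nat.card_congr (Equiv.ofBijective F hF), Nat.card_sigma]
  rw [Finset.sum_congr rfl (fun x _ => hC _ _ (by omega) (by omega) (by omega))]
  rw [Finset.sum_const, Finset.card_univ, smul_eq_mul, Fintype.card_sigma]
  simp only [Fintype.card_fin]
  rw [Fin.sum_univ_eq_sum_range (fun s => s + 1)]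
  have := Finset.sum_range_id_mul_two (q + 1)
  rw [Finset.sum_range_succ'] at this
  simp only [add_zero, Nat.add_sub_cancel] at this
  rw [mul_right_comm, this]
  ring

lemma pb_arith (n : ℕ) (hn : 9 ≤ n) (α : ℝ) (hα1 : 3 / 4 ≤ α) (hα2 : α ≤ 4 / 5) (q : ℕ)
    (hq : q + 7 = max 9 (⌈α * (n : ℝ)⌉₊ + 1)) :
    q + 6 ≤ n ∧ ((q : ℝ) * (q + 1)) ≤ α ^ 2 * (((n - 6 : ℕ) : ℝ) * ((n - 6 : ℕ) + 1)) := by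
  have hn' : (9 : ℝ) ≤ n := by exact_mod_cast hn
  have hlt : (⌈α * (n : ℝ)⌉₊ : ℝ) < α * n + 1 := Nat.ceil_lt_add_one (by positivity)
  have e : ((n - 6 : ℕ) : ℝ) = n - 6 := by
    rw [Nat.cast_sub (by omega)]; norm_num
  rw [e]
  rcases le_total 9 (⌈α * (n : ℝ)⌉₊ + 1) with h | h
  · rw [max_eq_right h] at hq
    have hq' : (⌈α * (n : ℝ)⌉₊ : ℝ) = q + 6 := by
      have : ⌈α * (n : ℝ)⌉₊ = q + 6 := by omega
      rw [this]; push_cast; ring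
    rw [hq'] at hlt
    constructor
    · have : ((q + 6 : ℕ) : ℝ) < n + 1 := by push_cast; nlinarith
      have : q + 6 < n + 1 := by exact_mod_cast this
      omega
    · have h1 : (q : ℝ) * (q + 1) ≤ (α * n - 5) * (α * n - 4) := by
        apply mul_le_mul <;> first | linarith | positivity
      nlinarith [mul_nonneg (sub_nonneg.2 hα1) (sub_nonneg.2 hα2),
        mul_nonneg (mul_nonneg (sub_nonneg.2 hα1) (sub_nonneg.2 hα2)) (sub_nonneg.2 hn'),
        mul_nonneg (sub_nonneg.2 hα2) (sub_nonneg.2 hn'),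
        mul_nonneg (sub_nonneg.2 hα1) (sub_nonneg.2 hn')]
  · rw [max_eq_left h] at hq
    obtain rfl : q = 2 := by omega
    refine ⟨by omega, ?_⟩
    have h2 : (9 / 16 : ℝ) ≤ α ^ 2 := by nlinarith
    have h3 : (12 : ℝ) ≤ (n - 6) * (n - 6 + 1) := by nlinarith
    push_cast
    nlinarith

lemma pb_pow (ε α : ℝ) (hε0 : 0 < ε) (hα1 : 3 / 4 ≤ α) (hα2 : α ≤ 4 / 5)
    (R : ℕ) (hR : R = ⌈(1 / 2) * (Real.log ε / Real.log α)⌉₊) : (α ^ 2) ^ R ≤ ε := by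
  have hl : Real.log α < 0 := Real.log_neg (by linarith) (by linarith)
  have h1 : (1 / 2) * (Real.log ε / Real.log α) ≤ R := by rw [hR]; exact Nat.le_ceil _
  have h2 : 2 * R * Real.log α ≤ Real.log ε := by
    have : Real.log ε / Real.log α ≤ 2 * R := by linarith
    rwa [div_le_iff_of_neg hl] at this
  rw [← pow_mul, ← Real.log_le_log_iff (by positivity) hε0, Real.log_pow]
  push_cast
  exact h2

lemma pb_tuples {T : Type} [Fintype T] (g : T → Prop) (R : ℕ) (x ε : ℝ) (hT : 0 < Nat.card T)
    (hb : (Nat.card {t // ¬ g t} : ℝ) ≤ x * Nat.card T) (hx : x ^ R ≤ ε) (hx0 : 0 ≤ x) :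
    1 - ε ≤ ((Finset.univ.filter (fun f : Fin R → T => ∃ j, g (f j))).card : ℝ) /
      (Fintype.card (Fin R → T) : ℝ) := by
  have h1 := Finset.card_filter_add_card_filter_not (s := (Finset.univ : Finset (Fin R → T)))
    (fun f => ∃ j, g (f j))
  have h2 : (Finset.univ.filter (fun f : Fin R → T => ¬ ∃ j, g (f j))).card =
      (Nat.card {t // ¬ g t}) ^ R := by
    have : (Finset.univ.filter (fun f : Fin R → T => ¬ ∃ j, g (f j))) =
        Fintype.piFinset (fun _ : Fin R => Finset.univ.filter (fun t => ¬ g t)) := by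
      ext f; simp
    rw [this, Fintype.card_piFinset, Finset.prod_const, Finset.card_univ, Fintype.card_fin,
      Nat.card_eq_fintype_card, Fintype.card_subtype]
  rw [h2, Finset.card_univ, Fintype.card_fun, Fintype.card_fin, ← Nat.card_eq_fintype_card] at h1
  rw [Fintype.card_fun, Fintype.card_fin, ← Nat.card_eq_fintype_card]
  have hT' : (0 : ℝ) < Nat.card T := by exact_mod_cast hT
  have h3 : ((Finset.univ.filter (fun f : Fin R → T => ∃ j, g (f j))).card : ℝ) +
    (Nat.card {t // ¬ g t} : ℝ) ^ R = (Nat.card T : ℝ) ^ R := by exact_mod_cast h1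
  have h4 : (Nat.card {t // ¬ g t} : ℝ) ^ R ≤ ε * (Nat.card T : ℝ) ^ R := by
    calc _ ≤ (x * Nat.card T : ℝ) ^ R := by gcongr
      _ = x ^ R * (Nat.card T : ℝ) ^ R := mul_pow _ _ _
      _ ≤ _ := by gcongr
  push_cast
  rw [le_div_iff₀ (by positivity)]
  linarith

/-- Let `n ≥ 9`, `G ∈ {Alt_n, Sym_n}`, `c ∈ G` a `3`-cycle, `0 < ε < 1`,
`3/4 ≤ α ≤ 4/5` and `R = ⌈(1/2)·log_α ε⌉`.  Among all `R`-tuples of pre-bolstering elements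
of `G` with respect to `c` (each tuple equally likely, modelling independent uniform random
pre-bolstering elements), the proportion of tuples containing an entry that is
`k`-pre-bolstering for some `k ≥ max(9, ⌈αn⌉ + 1)` is at least `1 − ε`. -/
theorem long_preBolstering_found_with_high_probability (n : ℕ) (hn : 9 ≤ n)
    (H : Subgroup (Equiv.Perm (Fin n))) (hH : H = ⊤ ∨ H = alternatingGroup (Fin n))
    (c : Equiv.Perm (Fin n)) (hcH : c ∈ H) (hc : c.IsThreeCycle)
    (ε α : ℝ) (hε0 : 0 < ε) (hε1 : ε < 1) (hα1 : 3 / 4 ≤ α) (hα2 : α ≤ 4 / 5)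
    (R : ℕ) (hR : R = ⌈(1 / 2) * (Real.log ε / Real.log α)⌉₊) :
    1 - ε ≤
      ((Finset.univ.filter
          (fun f : Fin R → {r : Equiv.Perm (Fin n) // r ∈ H ∧ IsPreBolstering c r} =>
            ∃ j : Fin R, ∃ k, max 9 (⌈α * (n : ℝ)⌉₊ + 1) ≤ k ∧
              IsKPreBolstering k c ((f j : Equiv.Perm (Fin n))))).card : ℝ) /
        (Fintype.card
          (Fin R → {r : Equiv.Perm (Fin n) // r ∈ H ∧ IsPreBolstering c r}) : ℝ) := by

  obtain ⟨C, C0, hC⟩ := pb_card_Q hc H hH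
  obtain ⟨q, hq⟩ : ∃ q, q + 7 = max 9 (⌈α * (n : ℝ)⌉₊ + 1) :=
    ⟨max 9 (⌈α * (n : ℝ)⌉₊ + 1) - 7, by have := le_max_left 9 (⌈α * (n : ℝ)⌉₊ + 1); omega⟩
  obtain ⟨hqn, har⟩ := pb_arith n hn α hα1 hα2 q hq
  rw [← hq]
  have hT : Nat.card {r : Equiv.Perm (Fin n) // r ∈ H ∧ IsPreBolstering c r} * 2 =
      C * ((n - 6) * ((n - 6) + 1)) := by
    rw [← hC (n - 6) (by omega)]
    congr 1
    refine Nat.card_congr (Equiv.subtypeEquivRight (fun r => and_congr_right (fun _ => ?_)))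
    constructor
    · rintro ⟨k, hk⟩
      refine ⟨k, ?_, hk⟩
      obtain ⟨a', b', u, v, w, a, b, rfl, h⟩ := (pb_iff _ _ _).1 hk
      have := pb_W_le hc ⟨u, v, w, a, b, h⟩
      omega
    · rintro ⟨k, -, hk⟩
      exact ⟨k, hk⟩
  have hB : Nat.card {t : {r : Equiv.Perm (Fin n) // r ∈ H ∧ IsPreBolstering c r} //
      ¬ ∃ k, q + 7 ≤ k ∧ IsKPreBolstering k c t.1} * 2 = C * (q * (q + 1)) := by
    rw [← hC q hqn]
    congr 1
    refine Nat.card_congr ((Equiv.subtypeSubtypeEquivSubtypeInter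
      (fun r : Equiv.Perm (Fin n) => r ∈ H ∧ IsPreBolstering c r)
      (fun r => ¬ ∃ k, q + 7 ≤ k ∧ IsKPreBolstering k c r)).trans
      (Equiv.subtypeEquivRight (fun r => ?_)))
    constructor
    · rintro ⟨⟨h, k, hk⟩, h'⟩
      refine ⟨h, k, ?_, hk⟩
      by_contra hlt
      exact h' ⟨k, by omega, hk⟩
    · rintro ⟨h, k, hk, hK⟩
      refine ⟨⟨h, k, hK⟩, ?_⟩
      rintro ⟨k', hk', hK'⟩
      obtain ⟨_, _, _, _, _, _, _, e, h⟩ := (pb_iff _ _ _).1 hK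
      obtain ⟨_, _, _, _, _, _, _, e', h'⟩ := (pb_iff _ _ _).1 hK'
      obtain ⟨-, -, -, e1, e2, -, -⟩ := pb_raw_uniq hc h h'
      omega
  have hT0 : 0 < Nat.card {r : Equiv.Perm (Fin n) // r ∈ H ∧ IsPreBolstering c r} := by
    have : 0 < C * ((n - 6) * ((n - 6) + 1)) := by
      have : 0 < n - 6 := by omega
      positivity
    omega
  have key := pb_tuples
    (fun t : {r : Equiv.Perm (Fin n) // r ∈ H ∧ IsPreBolstering c r} =>
      ∃ k, q + 7 ≤ k ∧ IsKPreBolstering k c t.1) R (α ^ 2) ε hT0 ?_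
    (pb_pow ε α hε0 hα1 hα2 R hR) (by positivity)
  · exact key
  · have hT' : (Nat.card {r : Equiv.Perm (Fin n) // r ∈ H ∧ IsPreBolstering c r} : ℝ) * 2 =
      C * (((n - 6 : ℕ) : ℝ) * ((n - 6 : ℕ) + 1)) := by exact_mod_cast hT
    have hB' : (Nat.card {t : {r : Equiv.Perm (Fin n) // r ∈ H ∧ IsPreBolstering c r} //
      ¬ ∃ k, q + 7 ≤ k ∧ IsKPreBolstering k c t.1} : ℝ) * 2 = C * (q * (q + 1)) := by
      exact_mod_cast hB
    have := mul_le_mul_of_nonneg_left har (Nat.cast_nonneg (α := ℝ) C)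
    nlinarith
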